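/- Let u ≥ 1, let {I_ν}_ν be a finite or countable family of pairwise disjoint order-convex subsets (intervals) of ℕ, and let (a_ν) be complex coefficients with Σ_ν |a_ν|^u < ∞. Then the sequence g : ℕ → ℂ defined by g = Σ_ν a_ν 1_{I_ν} satisfies 𝒱_u(g) ≤ 2 (Σ_ν |a_ν|^u)^{1/u}. -/

import Mathlib

open scoped ENNReal

/-- The `u`-variation `𝒱_u(m)` of a sequence `m : ℕ → ℂ`, as a value in `[0,∞]`:
the supremum over all finite increasing strings `j 0 < j 1 < ⋯ < j N` of
`(∑_{n=1}^N |m(j n) - m(j (n-1))|^u)^(1/u)`. -/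
noncomputable def eVar (u : ℝ) (m : ℕ → ℂ) : ℝ≥0∞ :=
  ⨆ (N : ℕ) (j : Fin (N + 1) → ℕ) (_ : StrictMono j),
    (∑ i : Fin N, (ENNReal.ofReal ‖m (j i.succ) - m (j i.castSucc)‖) ^ u) ^ (1 / u)

/-!
A step of the string changes `g = ∑_ν a_ν 1_{I_ν}` by adding `a_ν` if it enters `I_ν` and
subtracting `a_ν` if it leaves `I_ν`. A monotone string enters and leaves an order-convex set at
most once each, and by disjointness a step enters at most one `I_ν` and leaves at most one. So the
entries and the exits each have `ℓ^u`-norm at most `(∑_ν |a_ν|^u)^(1/u)`, and Minkowski's inequality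
adds the two.
-/

section DisjointIndicators

variable {α ι M : Type*} {I : ι → Set α}

theorem support_indicator_const_apply_subsingleton [Zero M]
    (hI : Pairwise (Function.onFun Disjoint I)) (a : ι → M) (x : α) :
    (Function.support fun ν => (I ν).indicator (fun _ => a ν) x).Subsingleton := by
  intro ν hν μ hμ
  by_contra hne
  exact Set.disjoint_left.mp (hI hne) (Set.mem_of_indicator_ne_zero hν)
    (Set.mem_of_indicator_ne_zero hμ)

theorem summable_indicator_const_apply [AddCommMonoid M] [TopologicalSpace M]
    (hI : Pairwise (Function.onFun Disjoint I)) (a : ι → M) (x : α) :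
    Summable fun ν => (I ν).indicator (fun _ => a ν) x :=
  summable_of_hasFiniteSupport (support_indicator_const_apply_subsingleton hI a x).finite

theorem map_tsum_indicator_const_apply {M' : Type*} [AddCommMonoid M] [TopologicalSpace M]
    [AddCommMonoid M'] [TopologicalSpace M'] (hI : Pairwise (Function.onFun Disjoint I))
    {φ : M → M'} (hφ : φ 0 = 0) (a : ι → M) (x : α) :
    φ (∑' ν, (I ν).indicator (fun _ => a ν) x) =
      ∑' ν, (I ν).indicator (fun _ => φ (a ν)) x := by
  by_cases h : ∃ ν, x ∈ I ν
  · obtain ⟨ν, hν⟩ := h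
    have notMem_of_ne : ∀ μ ≠ ν, x ∉ I μ := fun μ hμ hx =>
      Set.disjoint_left.mp (hI hμ) hx hν
    rw [tsum_eq_single ν fun μ hμ => Set.indicator_of_notMem (notMem_of_ne μ hμ) _,
      tsum_eq_single ν fun μ hμ => Set.indicator_of_notMem (notMem_of_ne μ hμ) _,
      Set.indicator_of_mem hν, Set.indicator_of_mem hν]
  · push Not at h
    simp [h, hφ]

end DisjointIndicators

theorem sum_indicator_const_le_of_subsingleton {κ M : Type*} [Fintype κ] [AddCommMonoid M]
    [PartialOrder M] [CanonicallyOrderedAdd M] {s : Set κ} (hs : s.Subsingleton) (c : M) :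
    ∑ i, s.indicator (fun _ => c) i ≤ c := by
  rcases hs.eq_empty_or_singleton with rfl | ⟨i, rfl⟩
  · simp
  · classical simp [Set.indicator_apply]

theorem sum_tsum_indicator_rpow_le {κ ι : Type*} [Fintype κ] {J : ι → Set κ}
    (hdisj : Pairwise (Function.onFun Disjoint J)) (hJ : ∀ ν, (J ν).Subsingleton)
    (b : ι → ℝ≥0∞) {u : ℝ} (hu : 0 < u) :
    ∑ i, (∑' ν, (J ν).indicator (fun _ => b ν) i) ^ u ≤ ∑' ν, b ν ^ u :=
  calc ∑ i, (∑' ν, (J ν).indicator (fun _ => b ν) i) ^ u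
      = ∑ i, ∑' ν, (J ν).indicator (fun _ => b ν ^ u) i :=
        Finset.sum_congr rfl fun i _ =>
          map_tsum_indicator_const_apply hdisj (φ := (· ^ u)) (ENNReal.zero_rpow_of_pos hu) b i
    _ = ∑' ν, ∑ i, (J ν).indicator (fun _ => b ν ^ u) i :=
        (Summable.tsum_finsetSum fun _ _ => ENNReal.summable).symm
    _ ≤ ∑' ν, b ν ^ u :=
        ENNReal.tsum_le_tsum fun ν => sum_indicator_const_le_of_subsingleton (hJ ν) _

section Steps

variable {α : Type*} {N : ℕ}

/-- The steps at which the string `x 0, …, x N` enters `S`; step `i` goes from `x i.castSucc` to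
`x i.succ`. -/
def entrySteps (x : Fin (N + 1) → α) (S : Set α) : Set (Fin N) :=
  {i | x i.castSucc ∉ S ∧ x i.succ ∈ S}

/-- The steps at which the string `x 0, …, x N` leaves `S`; step `i` goes from `x i.castSucc` to
`x i.succ`. -/
def exitSteps (x : Fin (N + 1) → α) (S : Set α) : Set (Fin N) :=
  {i | x i.castSucc ∈ S ∧ x i.succ ∉ S}

theorem pairwise_disjoint_entrySteps {ι : Type*} {I : ι → Set α}
    (hI : Pairwise (Function.onFun Disjoint I)) (x : Fin (N + 1) → α) :
    Pairwise (Function.onFun Disjoint fun ν => entrySteps x (I ν)) := fun _ _ h =>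
  ((hI h).preimage (x ∘ Fin.succ)).mono (fun _ hi => hi.2) (fun _ hi => hi.2)

theorem pairwise_disjoint_exitSteps {ι : Type*} {I : ι → Set α}
    (hI : Pairwise (Function.onFun Disjoint I)) (x : Fin (N + 1) → α) :
    Pairwise (Function.onFun Disjoint fun ν => exitSteps x (I ν)) := fun _ _ h =>
  ((hI h).preimage (x ∘ Fin.castSucc)).mono (fun _ hi => hi.1) (fun _ hi => hi.1)

theorem entrySteps_subsingleton [Preorder α] {x : Fin (N + 1) → α} (hx : Monotone x) {S : Set α}
    (hS : S.OrdConnected) : (entrySteps x S).Subsingleton := by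
  intro i hi k hk
  by_contra hne
  wlog hik : i < k generalizing i k
  · exact this hk hi (Ne.symm hne) ((lt_or_gt_of_ne hne).resolve_left hik)
  exact absurd (hS.out hi.2 hk.2
    ⟨hx (Fin.succ_le_castSucc_iff.mpr hik), hx k.castSucc_le_succ⟩) hk.1

theorem exitSteps_subsingleton [Preorder α] {x : Fin (N + 1) → α} (hx : Monotone x) {S : Set α}
    (hS : S.OrdConnected) : (exitSteps x S).Subsingleton := by
  intro i hi k hk
  by_contra hne
  wlog hik : i < k generalizing i k
  · exact this hk hi (Ne.symm hne) ((lt_or_gt_of_ne hne).resolve_left hik)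
  exact absurd (hS.out hi.1 hk.1
    ⟨hx i.castSucc_le_succ, hx (Fin.succ_le_castSucc_iff.mpr hik)⟩) hi.2

theorem enorm_indicator_step_le {E : Type*} [SeminormedAddCommGroup E] (x : Fin (N + 1) → α)
    (S : Set α) (c : E) (i : Fin N) :
    ‖S.indicator (fun _ => c) (x i.succ) - S.indicator (fun _ => c) (x i.castSucc)‖ₑ ≤
      (entrySteps x S).indicator (fun _ => ‖c‖ₑ) i +
        (exitSteps x S).indicator (fun _ => ‖c‖ₑ) i := by
  by_cases hsucc : x i.succ ∈ S <;> by_cases hcast : x i.castSucc ∈ S <;>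
    simp [entrySteps, exitSteps, hsucc, hcast, enorm_eq_nnnorm]

variable {ι E : Type*} [NormedAddCommGroup E] {I : ι → Set α}

theorem enorm_tsum_indicator_step_le (hI : Pairwise (Function.onFun Disjoint I)) (a : ι → E)
    (x : Fin (N + 1) → α) (i : Fin N) :
    ‖∑' ν, (I ν).indicator (fun _ => a ν) (x i.succ) -
        ∑' ν, (I ν).indicator (fun _ => a ν) (x i.castSucc)‖ₑ ≤
      ∑' ν, (entrySteps x (I ν)).indicator (fun _ => ‖a ν‖ₑ) i +
        ∑' ν, (exitSteps x (I ν)).indicator (fun _ => ‖a ν‖ₑ) i := by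
  rw [← (summable_indicator_const_apply hI a _).tsum_sub (summable_indicator_const_apply hI a _),
    ← ENNReal.tsum_add]
  exact enorm_tsum_le_tsum_enorm.trans
    (ENNReal.tsum_le_tsum fun ν => enorm_indicator_step_le x (I ν) (a ν) i)

theorem rpow_sum_enorm_tsum_indicator_step_le [Preorder α] {u : ℝ} (hu : 1 ≤ u)
    (hconv : ∀ ν, (I ν).OrdConnected) (hdisj : Pairwise (Function.onFun Disjoint I)) (a : ι → E)
    {x : Fin (N + 1) → α} (hx : Monotone x) :
    (∑ i : Fin N, ‖∑' ν, (I ν).indicator (fun _ => a ν) (x i.succ) -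
        ∑' ν, (I ν).indicator (fun _ => a ν) (x i.castSucc)‖ₑ ^ u) ^ (1 / u) ≤
      2 * (∑' ν, ‖a ν‖ₑ ^ u) ^ (1 / u) := by
  have hu0 : 0 < u := zero_lt_one.trans_le hu
  let entry (i : Fin N) : ℝ≥0∞ := ∑' ν, (entrySteps x (I ν)).indicator (fun _ => ‖a ν‖ₑ) i
  let exit (i : Fin N) : ℝ≥0∞ := ∑' ν, (exitSteps x (I ν)).indicator (fun _ => ‖a ν‖ₑ) i
  have entry_le : ∑ i, entry i ^ u ≤ ∑' ν, ‖a ν‖ₑ ^ u :=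
    sum_tsum_indicator_rpow_le (pairwise_disjoint_entrySteps hdisj x)
      (fun ν => entrySteps_subsingleton hx (hconv ν)) _ hu0
  have exit_le : ∑ i, exit i ^ u ≤ ∑' ν, ‖a ν‖ₑ ^ u :=
    sum_tsum_indicator_rpow_le (pairwise_disjoint_exitSteps hdisj x)
      (fun ν => exitSteps_subsingleton hx (hconv ν)) _ hu0
  calc (∑ i : Fin N, ‖∑' ν, (I ν).indicator (fun _ => a ν) (x i.succ) -
          ∑' ν, (I ν).indicator (fun _ => a ν) (x i.castSucc)‖ₑ ^ u) ^ (1 / u)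
      ≤ (∑ i, (entry i + exit i) ^ u) ^ (1 / u) := by
        gcongr with i
        exact enorm_tsum_indicator_step_le hdisj a x i
    _ ≤ (∑ i, entry i ^ u) ^ (1 / u) + (∑ i, exit i ^ u) ^ (1 / u) :=
        ENNReal.Lp_add_le _ _ _ hu
    _ ≤ (∑' ν, ‖a ν‖ₑ ^ u) ^ (1 / u) + (∑' ν, ‖a ν‖ₑ ^ u) ^ (1 / u) := by gcongr
    _ = 2 * (∑' ν, ‖a ν‖ₑ ^ u) ^ (1 / u) := (two_mul _).symm

end Steps

theorem ofReal_rpow_tsum_norm_rpow {ι E : Type*} [SeminormedAddGroup E] {u : ℝ} (hu : 0 ≤ u)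
    {a : ι → E} (ha : Summable fun ν => ‖a ν‖ ^ u) :
    ENNReal.ofReal ((∑' ν, ‖a ν‖ ^ u) ^ (1 / u)) = (∑' ν, ‖a ν‖ₑ ^ u) ^ (1 / u) := by
  have term_nonneg (ν : ι) : 0 ≤ ‖a ν‖ ^ u := by positivity
  rw [← ENNReal.ofReal_rpow_of_nonneg (tsum_nonneg term_nonneg) (by positivity),
    ENNReal.ofReal_tsum_of_nonneg term_nonneg ha]
  simp only [← ENNReal.ofReal_rpow_of_nonneg (norm_nonneg _) hu, ofReal_norm]

theorem haar_stmt0_general {ι : Type*} {u : ℝ} (hu : 1 ≤ u) {I : ι → Set ℕ}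
    (hconv : ∀ ν, (I ν).OrdConnected) (hdisj : Pairwise (Function.onFun Disjoint I)) (a : ι → ℂ) :
    eVar u (fun n => ∑' ν, (I ν).indicator (fun _ => a ν) n) ≤
      2 * (∑' ν, ‖a ν‖ₑ ^ u) ^ (1 / u) := by
  refine iSup_le fun N => iSup_le fun j => iSup_le fun hj => ?_
  simp only [ofReal_norm]
  exact rpow_sum_enorm_tsum_indicator_step_le hu hconv hdisj a hj.monotone

/-- If `u ≥ 1`, `{I ν}` is a countable family of pairwise disjoint order-convex
subsets (intervals) of `ℕ` and `a` has `Σ_ν |a ν|^u < ∞`, then the sequence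
`g = Σ_ν a_ν 1_{I ν}` satisfies `𝒱_u(g) ≤ 2 (Σ_ν |a ν|^u)^(1/u)`. -/
theorem haar_stmt0 (u : ℝ) (hu : 1 ≤ u) (I : ℕ → Set ℕ)
    (hconv : ∀ ν, (I ν).OrdConnected)
    (hdisj : Pairwise (Function.onFun Disjoint I))
    (a : ℕ → ℂ) (ha : Summable fun ν => ‖a ν‖ ^ u) :
    eVar u (fun n => ∑' ν : ℕ, (I ν).indicator (fun _ => a ν) n)
      ≤ ENNReal.ofReal (2 * (∑' ν : ℕ, ‖a ν‖ ^ u) ^ (1 / u)) := by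
  rw [ENNReal.ofReal_mul zero_le_two, ENNReal.ofReal_ofNat,
    ofReal_rpow_tsum_norm_rpow (zero_le_one.trans hu) ha]
  exact haar_stmt0_general hu hconv hdisj a
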